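/- arXiv:2412.21125 — 2 statements merged into one kernel-verified Lean document; each statement's English description precedes it below -/
import Mathlib

section
/- Let X be a nonempty countable closed subset of ℝⁿ and H a hypothesis on X such that sup_{P ∈ H} P({x}) > 0 for every x ∈ X. Then an optimal e-class for H exists. -/
open MeasureTheory Set ENNReal

noncomputable section

/-- The (topological) support of a Borel measure: the set of points all of whose open
neighbourhoods have positive measure. -/
def msupport {α : Type*} [TopologicalSpace α] [MeasurableSpace α]
    (P : Measure α) : Set α :=
  {x | ∀ U : Set α, IsOpen U → x ∈ U → 0 < P U}

variable {α : Type*} [TopologicalSpace α] [MeasurableSpace α] {X : Set α} {m : ℕ}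

/-- A hypothesis on `X`: a nonempty set of Borel probability measures (on `X`,
identified with the Borel probability measures supported in `X`). -/
def IsHypothesis (H : Set (Measure X)) : Prop :=
  H.Nonempty ∧ ∀ P ∈ H, IsProbabilityMeasure P

/-- An e-variable with respect to `H`: a Borel measurable nonnegative function whose
expectation is at most one under every `P ∈ H`. -/
def IsEVar (H : Set (Measure X)) (E : X → ℝ) : Prop :=
  Measurable E ∧ (∀ x, 0 ≤ E x) ∧ ∀ P ∈ H, ∫⁻ x, ENNReal.ofReal (E x) ∂P ≤ 1

/-- `f` majorises `g` if `f(x) ≥ g(x)` for every `x ∈ X`. -/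
def Majorises (f g : X → ℝ) : Prop := ∀ x, g x ≤ f x

/-- A maximal e-variable: an e-variable with no strict majoriser among e-variables. -/
def IsMaximalEVar (H : Set (Measure X)) (E : X → ℝ) : Prop :=
  IsEVar H E ∧ ¬ ∃ E', IsEVar H E' ∧ Majorises E' E ∧ E' ≠ E

/-- A majorising e-class: an e-class such that every e-variable is majorised by
one of its elements. -/
def IsMajorisingClass (H : Set (Measure X)) (C : Set (X → ℝ)) : Prop :=
  (∀ E ∈ C, IsEVar H E) ∧ ∀ E, IsEVar H E → ∃ E' ∈ C, Majorises E' E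

/-- The optimal e-class: a majorising e-class contained in every majorising e-class. -/
def IsOptimalClass (H : Set (Measure X)) (C : Set (X → ℝ)) : Prop :=
  IsMajorisingClass H C ∧ ∀ C', IsMajorisingClass H C' → C ⊆ C'

/-- `P ∈ P_Φ`: the expectation of the ℓ¹-norm of `Φ` under `P` is finite. -/
def MemPPhi (P : Measure X) (Φ : X → Fin m → ℝ) : Prop :=
  ∫⁻ x, ENNReal.ofReal (∑ i, |Φ x i|) ∂P < ⊤

/-- `Φ` is a constraint for `H`: `Φ` is continuous and `H` is exactly the set of Borel
probability measures `P ∈ P_Φ` with `⟨P, Φ⟩ = 0`. -/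
def IsConstraint (H : Set (Measure X)) (Φ : X → Fin m → ℝ) : Prop :=
  Continuous Φ ∧
    H = {P : Measure X | IsProbabilityMeasure P ∧ MemPPhi P Φ ∧ ∫ x, Φ x ∂P = 0}

/-- A proper constraint: a constraint such that `0` lies in the relative interior
of the convex hull of the image of `Φ`. -/
def IsProperConstraint (H : Set (Measure X)) (Φ : X → Fin m → ℝ) : Prop :=
  IsConstraint H Φ ∧
    (0 : Fin m → ℝ) ∈ intrinsicInterior ℝ (convexHull ℝ (Set.range Φ))

/-- A minimal constraint: a constraint such that `0` lies in the interior
of the convex hull of the image of `Φ`. -/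
def IsMinimalConstraint (H : Set (Measure X)) (Φ : X → Fin m → ℝ) : Prop :=
  IsConstraint H Φ ∧
    (0 : Fin m → ℝ) ∈ interior (convexHull ℝ (Set.range Φ))

/-- A finitely constrained hypothesis: one admitting a constraint. -/
def FinitelyConstrained (H : Set (Measure X)) : Prop :=
  ∃ (m : ℕ) (Φ : X → Fin m → ℝ), IsConstraint H Φ

/-- A properly constrained hypothesis: one admitting a proper constraint. -/
def ProperlyConstrained (H : Set (Measure X)) : Prop :=
  ∃ (m : ℕ) (Φ : X → Fin m → ℝ), IsProperConstraint H Φ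

/-- `Λ_{Φ|S} = {λ ∈ ℝᵐ : sup_{x ∈ S} λ·Φ(x) ≤ 1}`. -/
def LambdaSet (Φ : X → Fin m → ℝ) (S : Set X) : Set (Fin m → ℝ) :=
  {l | ∀ x ∈ S, ∑ i, l i * Φ x i ≤ 1}

/-- The dual e-class `E_H^∨ = {1 - λ·Φ : λ ∈ Λ_Φ}`. -/
def dualClass (Φ : X → Fin m → ℝ) : Set (X → ℝ) :=
  {E | ∃ l ∈ LambdaSet Φ Set.univ, E = fun x => 1 - ∑ i, l i * Φ x i}

/-- A matching set for `H`: a closed set that is exactly the support of some `P ∈ H`. -/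
def IsMatchingSet (H : Set (Measure X)) (S : Set X) : Prop :=
  IsClosed S ∧ ∃ P ∈ H, msupport P = S

end

/-!
An e-variable is bounded at `x` by `1 / P {x}` for any `P ∈ H` charging `x`. On a countable space
an integral is a sum over atoms, so monotone convergence holds for directed families of any
cardinality, and the supremum of a chain of e-variables is again an e-variable. By Zorn's lemma
every e-variable is majorised by a maximal one, while a maximal e-variable belongs to every
majorising class since nothing else majorises it.
-/

theorem lintegral_iSup_of_directed_of_countable {β : Type*} [MeasurableSpace β] [Countable β]
    [MeasurableSingletonClass β] {ι : Type*} {f : ι → β → ℝ≥0∞} (hf : Directed (· ≤ ·) f)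
    (μ : Measure β) : ∫⁻ x, ⨆ i, f i x ∂μ = ⨆ i, ∫⁻ x, f i x ∂μ := by
  have directed_mul : ∀ i j, ∃ k, ∀ x,
      f i x * μ {x} ≤ f k x * μ {x} ∧ f j x * μ {x} ≤ f k x * μ {x} := fun i j ↦
    let ⟨k, hik, hjk⟩ := hf i j
    ⟨k, fun x ↦ ⟨mul_le_mul_left (hik x) _, mul_le_mul_left (hjk x) _⟩⟩
  calc ∫⁻ x, ⨆ i, f i x ∂μ
      = ⨆ s : Finset β, ∑ x ∈ s, ⨆ i, f i x * μ {x} := by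
        simp only [lintegral_countable', ENNReal.tsum_eq_iSup_sum, ENNReal.iSup_mul]
    _ = ⨆ s : Finset β, ⨆ i, ∑ x ∈ s, f i x * μ {x} := by
        simp only [ENNReal.finsetSum_iSup directed_mul]
    _ = ⨆ i, ∫⁻ x, f i x ∂μ := by
        rw [iSup_comm]
        simp only [lintegral_countable', ENNReal.tsum_eq_iSup_sum]

section EVariables

variable {α : Type*} [MeasurableSpace α] {X : Set α} {H : Set (Measure X)} {E : X → ℝ}

theorem IsEVar.ofReal_apply_le_inv_measure_singleton [MeasurableSingletonClass X] (hE : IsEVar H E)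
    {P : Measure X} (hP : P ∈ H) (x : X) : ENNReal.ofReal (E x) ≤ (P {x})⁻¹ := by
  rw [ENNReal.le_inv_iff_mul_le]
  calc ENNReal.ofReal (E x) * P {x}
      = ∫⁻ y in {x}, ENNReal.ofReal (E y) ∂P := by
        rw [lintegral_singleton (fun y ↦ ENNReal.ofReal (E y))]
    _ ≤ ∫⁻ y, ENNReal.ofReal (E y) ∂P := setLIntegral_le_lintegral _ _
    _ ≤ 1 := hE.2.2 P hP

theorem bddAbove_setOf_isEVar [MeasurableSingletonClass X]
    (hpos : ∀ x : X, 0 < ⨆ P ∈ H, P {x}) : BddAbove {E | IsEVar H E} := by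
  simp only [lt_iSup_iff] at hpos
  choose P hP hPx using hpos
  exact ⟨fun x ↦ (P x {x})⁻¹.toReal, fun E hE x ↦
    (ENNReal.ofReal_le_iff_le_toReal (ENNReal.inv_ne_top.2 (hPx x).ne')).1
      (hE.ofReal_apply_le_inv_measure_singleton (hP x) x)⟩

theorem IsEVar.iSup_of_directed [Countable X] [MeasurableSingletonClass X] {ι : Type*} [Nonempty ι]
    {F : ι → X → ℝ} (hF : ∀ i, IsEVar H (F i)) (hdir : Directed (· ≤ ·) F)
    (hbdd : BddAbove (range F)) : IsEVar H (⨆ i, F i) := by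
  have ofReal_iSup (x : X) :
      ENNReal.ofReal ((⨆ i, F i) x) = ⨆ i, ENNReal.ofReal (F i x) := by
    rw [iSup_apply]
    exact ENNReal.ofReal_mono.map_ciSup_of_continuousAt ENNReal.continuous_ofReal.continuousAt
      (bddAbove_range_pi.1 hbdd x)
  have directed_ofReal : Directed (· ≤ ·) fun i x ↦ ENNReal.ofReal (F i x) := fun i j ↦
    let ⟨k, hik, hjk⟩ := hdir i j
    ⟨k, fun x ↦ ENNReal.ofReal_le_ofReal (hik x), fun x ↦ ENNReal.ofReal_le_ofReal (hjk x)⟩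
  refine ⟨measurable_of_countable _, fun x ↦ ?_, fun P hP ↦ ?_⟩
  · rw [iSup_apply]
    exact Real.iSup_nonneg fun i ↦ (hF i).2.1 x
  · simp only [ofReal_iSup, lintegral_iSup_of_directed_of_countable directed_ofReal]
    exact iSup_le fun i ↦ (hF i).2.2 P hP

theorem isMaximalEVar_iff_maximal : IsMaximalEVar H E ↔ Maximal (IsEVar H) E :=
  and_congr_right fun _ ↦
    ⟨fun hmax E' hE' hle ↦ (not_not.1 fun hne ↦ hmax ⟨E', hE', hle, hne⟩).le,
      fun hmax ⟨_, hE', hle, hne⟩ ↦ hne ((hmax hE' hle).antisymm hle)⟩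

theorem IsEVar.exists_isMaximalEVar_majorises [Countable X] [MeasurableSingletonClass X]
    (hbdd : BddAbove {E | IsEVar H E}) (hE : IsEVar H E) :
    ∃ M, IsMaximalEVar H M ∧ Majorises M E := by
  have chain_bounded : ∀ c ⊆ {E | IsEVar H E}, IsChain (· ≤ ·) c → ∀ E₀ ∈ c,
      ∃ M ∈ {E | IsEVar H E}, ∀ F ∈ c, F ≤ M := by
    intro c hc hchain E₀ hE₀
    have : Nonempty c := ⟨⟨E₀, hE₀⟩⟩
    have hcbdd : BddAbove c := hbdd.mono hc
    refine ⟨sSup c, ?_, fun _ hF ↦ le_csSup hcbdd hF⟩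
    rw [sSup_eq_iSup']
    exact IsEVar.iSup_of_directed (fun F ↦ hc F.2) hchain.directedOn.directed_val
      (by rwa [Subtype.range_coe])
  obtain ⟨M, hEM, hM⟩ := zorn_le_nonempty₀ _ chain_bounded E hE
  exact ⟨M, isMaximalEVar_iff_maximal.2 hM, hEM⟩

theorem IsMaximalEVar.mem_of_isMajorisingClass (hE : IsMaximalEVar H E) {C : Set (X → ℝ)}
    (hC : IsMajorisingClass H C) : E ∈ C := by
  obtain ⟨E', hE'C, hle⟩ := hC.2 E hE.1
  exact (isMaximalEVar_iff_maximal.1 hE).eq_of_le (hC.1 E' hE'C) hle ▸ hE'C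

theorem statement3_general [Countable X] [MeasurableSingletonClass X]
    (hpos : ∀ x : X, 0 < ⨆ P ∈ H, P {x}) : IsOptimalClass H {E | IsMaximalEVar H E} :=
  ⟨⟨fun _ hE ↦ hE.1,
      fun _ hE ↦ hE.exists_isMaximalEVar_majorises (bddAbove_setOf_isEVar hpos)⟩,
    fun _ hC _ hE ↦ hE.mem_of_isMajorisingClass hC⟩

end EVariables

/-- if `X` is nonempty, countable and closed and `sup_{P ∈ H} P({x}) > 0`
for every `x ∈ X`, then an optimal e-class for `H` exists. -/
theorem statement3 {n : ℕ} {X : Set (EuclideanSpace ℝ (Fin n))}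
    (hXc : IsClosed X) (hXcnt : X.Countable) (hXne : X.Nonempty)
    (H : Set (Measure X)) (hH : IsHypothesis H)
    (hpos : ∀ x : X, 0 < ⨆ P ∈ H, P {x}) :
    ∃ C, IsOptimalClass H C := by
  have : Countable X := hXcnt.to_subtype
  exact ⟨_, statement3_general hpos⟩
end

section
/- Let X be a nonempty closed subset of ℝⁿ and H a finitely constrained hypothesis on X. Then H is properly constrained if and only if there exists P ∈ H whose support equals X. -/
open MeasureTheory Set ENNReal

/-!
Write `C` for the convex hull of `Φ(X)`. The means `⟨P, Φ⟩` of the probability measures `P` of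
full support fill exactly the relative interior of `C`. A mean `y` outside it would be exposed by
a functional `f` with `f ∘ Φ ≤ f y`, not identically equal; but `f ∘ Φ` has `P`-mean `f y`, so
equality holds `P`-almost everywhere, hence everywhere by continuity and full support. Conversely,
let `y` be in the relative interior and let `P₀` be any full-support measure with a mean `z`: then
`y` lies strictly between `z` and some `w ∈ C`, and mixing `P₀` with a measure of mean `w` gives
mean `y` without losing the full support.
-/

section Convexity

section TopologicalVectorSpace

variable {E : Type*} [AddCommGroup E] [Module ℝ E] [TopologicalSpace E] [IsTopologicalAddGroup E]
  [ContinuousSMul ℝ E] {s : Set E} {x y z : E}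

theorem exists_mem_openSegment_of_mem_intrinsicInterior (hy : y ∈ intrinsicInterior ℝ s)
    (hz : z ∈ affineSpan ℝ s) : ∃ w ∈ s, y ∈ openSegment ℝ z w := by
  obtain ⟨y, hys, rfl⟩ := mem_intrinsicInterior.1 hy
  let ray : ℝ → affineSpan ℝ s :=
    fun t => ⟨AffineMap.lineMap z (y : E) t, AffineMap.lineMap_mem t hz y.2⟩
  have hray : Continuous ray := AffineMap.lineMap_continuous.subtype_mk _
  have hray_one : ray 1 = y := Subtype.ext (AffineMap.lineMap_apply_one z (y : E))
  have hnear : ∀ᶠ t in nhds (1 : ℝ), (ray t : E) ∈ s :=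
    hray.continuousAt.eventually_mem (hray_one.symm ▸ mem_interior_iff_mem_nhds.1 hys)
  obtain ⟨t, hts, ht : 1 < t⟩ :=
    ((hnear.filter_mono nhdsWithin_le_nhds).and (self_mem_nhdsWithin (s := Ioi 1))).exists
  refine ⟨ray t, hts, ?_⟩
  have hy_eq : AffineMap.lineMap z (ray t : E) t⁻¹ = (y : E) := by
    rw [AffineMap.lineMap_lineMap_right, inv_mul_cancel₀ (by positivity),
      AffineMap.lineMap_apply_one]
  rw [← hy_eq]
  exact lineMap_mem_openSegment ℝ _ _ ⟨by positivity, inv_lt_one_of_one_lt₀ ht⟩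

theorem exists_strongDual_le_and_lt_of_notMem_interior (hs : Convex ℝ s)
    (hsne : (interior s).Nonempty) (hx : x ∉ interior s) :
    ∃ f : StrongDual ℝ E, (∀ y ∈ s, f y ≤ f x) ∧ ∃ y ∈ s, f y < f x := by
  obtain ⟨f, hf, hle⟩ := geometric_hahn_banach_of_nonempty_interior_point hs hx hsne
  have hlt : f '' interior s ⊆ Iio (f x) := by
    rw [← interior_Iic]
    exact interior_maximal (image_subset_iff.2 fun y hy => hle y (interior_subset hy))
      (f.isOpenMap_of_ne_zero hf _ isOpen_interior)
  obtain ⟨y, hy⟩ := hsne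
  exact ⟨f, hle, y, interior_subset hy, hlt (mem_image_of_mem f hy)⟩

end TopologicalVectorSpace

theorem affineSpan_preimage_eq_top {k V₁ V₂ P₁ P₂ : Type*} [Ring k] [AddCommGroup V₁] [Module k V₁]
    [AddTorsor V₁ P₁] [AddCommGroup V₂] [Module k V₂] [AddTorsor V₂ P₂] {φ : P₁ →ᵃ[k] P₂}
    {s : Set P₂} (hφ : Function.Injective φ) (hrange : range φ = affineSpan k s) :
    affineSpan k (φ ⁻¹' s) = ⊤ := by
  have himage : φ '' (φ ⁻¹' s) = s :=
    image_preimage_eq_of_subset (hrange ▸ subset_affineSpan k s)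
  have hmap : (affineSpan k (φ ⁻¹' s)).map φ = affineSpan k s := by
    rw [AffineSubspace.map_span, himage]
  apply SetLike.coe_injective
  apply hφ.image_injective
  rw [← AffineSubspace.coe_map, hmap, AffineSubspace.top_coe, image_univ, hrange]

variable {E : Type*} [NormedAddCommGroup E] [NormedSpace ℝ E] {s : Set E} {x : E}

theorem exists_strongDual_le_and_lt_of_notMem_intrinsicInterior
    [FiniteDimensional ℝ (affineSpan ℝ s).direction] (hs : Convex ℝ s) (hx : x ∈ affineSpan ℝ s)
    (hxs : x ∉ intrinsicInterior ℝ s) :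
    ∃ f : StrongDual ℝ E, (∀ y ∈ s, f y ≤ f x) ∧ ∃ y ∈ s, f y < f x := by
  let V := (affineSpan ℝ s).direction
  let φ : V →ᵃⁱ[ℝ] E :=
    (AffineIsometryEquiv.vaddConst ℝ x).toAffineIsometry.comp V.subtypeₗᵢ.toAffineIsometry
  have hφ (v : V) : φ v = v + x := rfl
  have hrange : range φ = affineSpan ℝ s := by
    ext y
    rw [SetLike.mem_coe, ← AffineSubspace.vsub_right_mem_direction_iff_mem hx]
    exact ⟨fun ⟨v, hv⟩ => by simp [← hv, hφ], fun hy => ⟨⟨_, hy⟩, sub_add_cancel y x⟩⟩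
  have himage : φ '' (φ ⁻¹' s) = s :=
    image_preimage_eq_of_subset (hrange ▸ subset_affineSpan ℝ s)
  have hconv : Convex ℝ (φ ⁻¹' s) := hs.affine_preimage φ.toAffineMap
  have hspan : affineSpan ℝ (φ ⁻¹' s) = ⊤ :=
    affineSpan_preimage_eq_top (φ := φ.toAffineMap) φ.injective hrange
  have hzero : (0 : V) ∉ interior (φ ⁻¹' s) := fun h => hxs <| by
    rw [← himage, φ.intrinsicInterior_image]
    exact ⟨0, interior_subset_intrinsicInterior h, by simp [hφ]⟩
  obtain ⟨f, hle, v, hv, hlt⟩ := exists_strongDual_le_and_lt_of_notMem_interior hconv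
    (hconv.interior_nonempty_iff_affineSpan_eq_top.2 hspan) hzero
  rw [map_zero] at hle hlt
  obtain ⟨g, hg, -⟩ := exists_extension_norm_eq V f
  have hgφ (v : V) : g (φ v) = f v + g x := by rw [hφ, map_add, hg]
  refine ⟨g, ?_, φ v, hv, by linarith [hgφ v]⟩
  rw [← himage]
  rintro _ ⟨w, hw, rfl⟩
  linarith [hgφ w, hle w hw]

end Convexity

section Means

open TopologicalSpace
open scoped NNReal

variable {Y E : Type*} [MeasurableSpace Y] [NormedAddCommGroup E]

theorem exists_isProbabilityMeasure_absolutelyContinuous_integrable {μ : Measure Y} [SFinite μ]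
    [NeZero μ] [NormedSpace ℝ E] {Φ : Y → E} (hΦ : AEStronglyMeasurable Φ μ) :
    ∃ P : Measure Y, IsProbabilityMeasure P ∧ μ ≪ P ∧ Integrable Φ P := by
  -- Tilting by `-‖Φ‖` makes `Φ` integrable because `t * exp (-t) ≤ 1`.
  have hΦ' : AEStronglyMeasurable Φ μ.toFinite := hΦ.mono_ac (toFinite_absolutelyContinuous μ)
  have hexp : AEStronglyMeasurable (fun x => Real.exp (-‖Φ x‖)) μ.toFinite :=
    Real.continuous_exp.comp_aestronglyMeasurable hΦ'.norm.neg
  have hdensity : Integrable (fun x => Real.exp (-‖Φ x‖)) μ.toFinite :=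
    .of_bound hexp 1 (.of_forall fun x => by simp)
  refine ⟨μ.toFinite.tilted fun x => -‖Φ x‖, isProbabilityMeasure_tilted hdensity,
    (absolutelyContinuous_toFinite μ).trans (absolutelyContinuous_tilted hdensity), ?_⟩
  rw [integrable_tilted_iff hdensity]
  refine .of_bound (hexp.smul hΦ') 1 (.of_forall fun x => ?_)
  rw [norm_smul, Real.norm_eq_abs, Real.abs_exp, Real.exp_neg, inv_mul_le_one₀ (Real.exp_pos _)]
  linarith [Real.add_one_le_exp ‖Φ x‖]

theorem isOpenPosMeasure_sum_dirac [TopologicalSpace Y] {ι : Type*} {d : ι → Y}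
    (hd : DenseRange d) : (Measure.sum fun i => Measure.dirac (d i)).IsOpenPosMeasure where
  open_pos U hU hne := by
    obtain ⟨i, hi⟩ := hd.exists_mem_open hU hne
    have hle : 1 ≤ Measure.sum (fun i => Measure.dirac (d i)) U := calc
      1 = Measure.dirac (d i) U := (Measure.dirac_apply_of_mem hi).symm
      _ ≤ Measure.sum (fun i => Measure.dirac (d i)) U := Measure.le_sum _ i U
    exact (zero_lt_one.trans_le hle).ne'

theorem isOpenPosMeasure_iff_msupport_eq_univ [TopologicalSpace Y] {P : Measure Y} :
    P.IsOpenPosMeasure ↔ msupport P = univ := by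
  refine ⟨fun _ => eq_univ_of_forall fun x U hU hx => hU.measure_pos P ⟨x, hx⟩,
    fun h => ⟨fun U hU ⟨x, hx⟩ => ?_⟩⟩
  have hxP : x ∈ msupport P := h ▸ mem_univ x
  exact (hxP U hU hx).ne'

variable [NormedSpace ℝ E] {P Q : Measure Y} {Φ : Y → E} {y z : E}

/-- `⟨P, Φ⟩ = y` for a probability measure `P ∈ P_Φ`. Integrability is part of the notion, so that
the mean is never the junk value `0` of a divergent integral. -/
structure HasMean (P : Measure Y) (Φ : Y → E) (y : E) : Prop where
  isProbabilityMeasure : IsProbabilityMeasure P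
  integrable : Integrable Φ P
  integral_eq : ∫ x, Φ x ∂P = y

theorem HasMean.smul_add_smul (hP : HasMean P Φ y) (hQ : HasMean Q Φ z) {a b : ℝ≥0}
    (hab : a + b = 1) : HasMean (a • P + b • Q) Φ (a • y + b • z) := by
  have := hP.isProbabilityMeasure
  have := hQ.isProbabilityMeasure
  have hPa : Integrable Φ (a • P) := hP.integrable.smul_measure_nnreal
  have hQb : Integrable Φ (b • Q) := hQ.integrable.smul_measure_nnreal
  refine ⟨⟨?_⟩, hPa.add_measure hQb, ?_⟩
  · simp [← ENNReal.coe_add, hab]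
  · rw [integral_add_measure hPa hQb, integral_smul_nnreal_measure, integral_smul_nnreal_measure,
      hP.integral_eq, hQ.integral_eq]

theorem hasMean_dirac [CompleteSpace E] (hΦ : StronglyMeasurable Φ) (x : Y) :
    HasMean (Measure.dirac x) Φ (Φ x) :=
  ⟨inferInstance, integrable_dirac' hΦ enorm_lt_top, integral_dirac' Φ x hΦ⟩

theorem convex_setOf_hasMean (Φ : Y → E) : Convex ℝ {y | ∃ P, HasMean P Φ y} := by
  rintro y ⟨P, hP⟩ z ⟨Q, hQ⟩ a b ha hb hab
  lift a to ℝ≥0 using ha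
  lift b to ℝ≥0 using hb
  exact ⟨_, hP.smul_add_smul hQ (mod_cast hab)⟩

theorem exists_hasMean_of_mem_convexHull [CompleteSpace E] (hΦ : StronglyMeasurable Φ)
    (hy : y ∈ convexHull ℝ (range Φ)) : ∃ P, HasMean P Φ y :=
  (convex_setOf_hasMean Φ).convexHull_subset_iff.2
    (range_subset_iff.2 fun x => ⟨_, hasMean_dirac hΦ x⟩) hy

theorem HasMean.mem_affineSpan [FiniteDimensional ℝ E] (hP : HasMean P Φ y) :
    y ∈ affineSpan ℝ (range Φ) := by
  have := hP.isProbabilityMeasure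
  have := FiniteDimensional.complete ℝ E
  rw [← hP.integral_eq]
  exact (affineSpan ℝ (range Φ)).convex.integral_mem
    (AffineSubspace.closed_of_finiteDimensional _)
    (.of_forall fun x => subset_affineSpan ℝ _ (mem_range_self x)) hP.integrable

theorem HasMean.continuousLinearMap_comp {F : Type*} [NormedAddCommGroup F] [NormedSpace ℝ F]
    [CompleteSpace E] [CompleteSpace F] (hP : HasMean P Φ y) (f : E →L[ℝ] F) :
    HasMean P (fun x => f (Φ x)) (f y) :=
  ⟨hP.isProbabilityMeasure, f.integrable_comp hP.integrable, by
    rw [f.integral_comp_comm hP.integrable, hP.integral_eq]⟩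

variable [TopologicalSpace Y]

theorem exists_isOpenPosMeasure_hasMean [SeparableSpace Y] [Nonempty Y]
    (hΦ : StronglyMeasurable Φ) :
    ∃ (P : Measure Y) (y : E), P.IsOpenPosMeasure ∧ HasMean P Φ y := by
  let μ : Measure Y := Measure.sum fun i => Measure.dirac (denseSeq Y i)
  have : μ.IsOpenPosMeasure := isOpenPosMeasure_sum_dirac (denseRange_denseSeq Y)
  obtain ⟨P, hP, hμP, hΦP⟩ := exists_isProbabilityMeasure_absolutelyContinuous_integrable
    (μ := μ) hΦ.aestronglyMeasurable
  exact ⟨P, _, hμP.isOpenPosMeasure, hP, hΦP, rfl⟩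

theorem HasMean.eq_of_le [P.IsOpenPosMeasure] {g : Y → ℝ} {c : ℝ} (hP : HasMean P g c)
    (hg : Continuous g) (hle : ∀ x, g x ≤ c) (x : Y) : g x = c := by
  have := hP.isProbabilityMeasure
  have hint : Integrable (fun x => c - g x) P := (integrable_const c).sub hP.integrable
  have hgap : ∫ x, c - g x ∂P = 0 := by
    simp [integral_sub (integrable_const c) hP.integrable, hP.integral_eq]
  have hae : (fun x => c - g x) =ᵐ[P] 0 :=
    (integral_eq_zero_iff_of_nonneg (fun x => sub_nonneg.2 (hle x)) hint).1 hgap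
  have heq : (fun x => c - g x) = 0 :=
    (Continuous.ae_eq_iff_eq P (continuous_const.sub hg) continuous_zero).1 hae
  exact (sub_eq_zero.1 (congrFun heq x)).symm

theorem HasMean.mem_intrinsicInterior [P.IsOpenPosMeasure] [FiniteDimensional ℝ E]
    (hP : HasMean P Φ y) (hΦ : Continuous Φ) :
    y ∈ intrinsicInterior ℝ (convexHull ℝ (range Φ)) := by
  have := FiniteDimensional.complete ℝ E
  by_contra hy
  have hspan : y ∈ affineSpan ℝ (convexHull ℝ (range Φ)) := by
    rw [affineSpan_convexHull]
    exact hP.mem_affineSpan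
  obtain ⟨f, hle, w, hw, hlt⟩ :=
    exists_strongDual_le_and_lt_of_notMem_intrinsicInterior (convex_convexHull ℝ _) hspan hy
  have heq (x : Y) : f (Φ x) = f y :=
    (hP.continuousLinearMap_comp f).eq_of_le (f.continuous.comp hΦ)
      (fun x => hle _ (subset_convexHull ℝ _ (mem_range_self x))) x
  have hwf : f w = f y :=
    convexHull_min (range_subset_iff.2 heq) (convex_hyperplane f.isLinear (f y)) hw
  exact hlt.ne hwf

theorem exists_isOpenPosMeasure_hasMean_of_mem_intrinsicInterior [SeparableSpace Y]
    [FiniteDimensional ℝ E] (hΦ : StronglyMeasurable Φ)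
    (hy : y ∈ intrinsicInterior ℝ (convexHull ℝ (range Φ))) :
    ∃ P : Measure Y, P.IsOpenPosMeasure ∧ HasMean P Φ y := by
  have := FiniteDimensional.complete ℝ E
  have : Nonempty Y := by
    rw [← range_nonempty_iff_nonempty (f := Φ), ← convexHull_nonempty_iff (𝕜 := ℝ)]
    exact ⟨y, intrinsicInterior_subset hy⟩
  obtain ⟨P, z, hPpos, hP⟩ := exists_isOpenPosMeasure_hasMean hΦ
  have hz : z ∈ affineSpan ℝ (convexHull ℝ (range Φ)) := by
    rw [affineSpan_convexHull]
    exact hP.mem_affineSpan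
  obtain ⟨w, hw, a, b, ha, hb, hab, rfl⟩ := exists_mem_openSegment_of_mem_intrinsicInterior hy hz
  obtain ⟨Q, hQ⟩ := exists_hasMean_of_mem_convexHull hΦ hw
  lift a to ℝ≥0 using ha.le
  lift b to ℝ≥0 using hb.le
  have haP : (a • P).IsOpenPosMeasure :=
    Measure.isOpenPosMeasure_smul P (ENNReal.coe_ne_zero.2 (by exact_mod_cast ha.ne'))
  have hle : a • P ≤ a • P + b • Q := Measure.le_add_right le_rfl
  exact ⟨_, hle.isOpenPosMeasure, hP.smul_add_smul hQ (mod_cast hab)⟩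

theorem exists_isOpenPosMeasure_hasMean_iff [SeparableSpace Y] [OpensMeasurableSpace Y]
    [FiniteDimensional ℝ E] (hΦ : Continuous Φ) :
    (∃ P : Measure Y, P.IsOpenPosMeasure ∧ HasMean P Φ y) ↔
      y ∈ intrinsicInterior ℝ (convexHull ℝ (range Φ)) :=
  have := FiniteDimensional.proper ℝ E
  ⟨fun ⟨_, _, hP⟩ => hP.mem_intrinsicInterior hΦ,
    exists_isOpenPosMeasure_hasMean_of_mem_intrinsicInterior hΦ.stronglyMeasurable⟩

end Means

section Constraints

open TopologicalSpace

variable {α : Type*} [MeasurableSpace α] {X : Set α} {m : ℕ} {Φ : X → Fin m → ℝ}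

theorem memPPhi_iff_integrable {P : Measure X} (hΦ : AEStronglyMeasurable Φ P) :
    MemPPhi P Φ ↔ Integrable Φ P := by
  have hnonneg (x : X) : 0 ≤ ∑ i, |Φ x i| := Finset.sum_nonneg fun i _ => abs_nonneg _
  rw [MemPPhi, ← hasFiniteIntegral_iff_ofReal (.of_forall hnonneg)]
  refine ⟨fun h => ⟨hΦ, h.mono' (.of_forall fun x => ?_)⟩,
    fun h => (integrable_finsetSum _ fun i _ => (h.eval i).abs).2⟩
  exact (pi_norm_le_iff_of_nonneg (hnonneg x)).2 fun i =>
    Finset.single_le_sum (fun i _ => abs_nonneg (Φ x i)) (Finset.mem_univ i)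

variable [TopologicalSpace α] [OpensMeasurableSpace X] {H : Set (Measure X)}

theorem IsConstraint.mem_iff_hasMean (hΦ : IsConstraint H Φ) {P : Measure X} :
    P ∈ H ↔ HasMean P Φ 0 := by
  rw [hΦ.2, mem_ofPred_eq, memPPhi_iff_integrable hΦ.1.aestronglyMeasurable]
  exact ⟨fun ⟨hP, hint, hmean⟩ => ⟨hP, hint, hmean⟩, fun ⟨hP, hint, hmean⟩ => ⟨hP, hint, hmean⟩⟩

variable [SeparableSpace X]

theorem IsConstraint.isProperConstraint_iff (hΦ : IsConstraint H Φ) :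
    IsProperConstraint H Φ ↔ ∃ P ∈ H, msupport P = univ := by
  simp only [IsProperConstraint, hΦ, true_and, ← exists_isOpenPosMeasure_hasMean_iff hΦ.1,
    hΦ.mem_iff_hasMean, isOpenPosMeasure_iff_msupport_eq_univ, and_comm]

theorem statement9_general (hH : FinitelyConstrained H) :
    ProperlyConstrained H ↔ ∃ P ∈ H, msupport P = univ := by
  constructor
  · rintro ⟨m, Φ, hΦ⟩
    exact hΦ.1.isProperConstraint_iff.1 hΦ
  · obtain ⟨m, Φ, hΦ⟩ := hH
    exact fun hP => ⟨m, Φ, hΦ.isProperConstraint_iff.2 hP⟩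

end Constraints

/-- a finitely constrained hypothesis is properly constrained iff some
`P ∈ H` has full support (support equal to `X`). -/
theorem statement9 {n : ℕ} {X : Set (EuclideanSpace ℝ (Fin n))}
    (hXc : IsClosed X) (hXne : X.Nonempty)
    (H : Set (Measure X)) (hHne : H.Nonempty) (hfc : FinitelyConstrained H) :
    ProperlyConstrained H ↔ ∃ P ∈ H, msupport P = (Set.univ : Set X) :=
  statement9_general hfc
end
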